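/- Let n ≥ 2, let r be an odd prime with r > n, let ζ = exp(2πi/r), and let b be an integer not divisible by r. Then there exists a unit u of the ring ℤ[ζ] such that G(b) = u · (ζ−1)^{(n−1)(r−1)/2}. -/

import Mathlib

/-!
Write `m = n - 1` and `π = ζ - 1`. In `ℤ[ζ]`, the ring of integers of the `r`-th cyclotomic field,
`π` is prime and `r` is associated to `π^(r-1)`.

As `n < r`, the Cartan matrix, of determinant `n`, is invertible mod `r`. Squaring the sum and
using orthogonality of characters therefore gives `G(b) * conj G(b) = r^m` (`gaussG_mul_star`).
Hence `G(b)` divides a power of the prime `π`, so `G(b) = u π^i` with `u` a unit. Since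
`conj π = -ζ⁻¹ π`, conjugating shows that `conj G(b)` is associated to `π^i` too, so
`π^(2i)` is associated to `r^m`, that is to `π^(m(r-1))`, and `i = m(r-1)/2` (`eq_unit_mul_pow`).
-/

open scoped BigOperators

/-- `ζ = exp(2πi/r)`. -/
noncomputable def zetaC (r : ℕ) : ℂ := Complex.exp (2 * Real.pi * Complex.I / r)

/-- The `(n-1)×(n-1)` Cartan matrix of `sl_n`. -/
def cartan (n : ℕ) : Matrix (Fin (n - 1)) (Fin (n - 1)) ℤ :=
  Matrix.of fun i j =>
    if (i : ℕ) = (j : ℕ) then 2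
    else if (i : ℕ) + 1 = (j : ℕ) ∨ (j : ℕ) + 1 = (i : ℕ) then -1 else 0

/-- The quadratic form `kᵗAk` attached to the Cartan matrix of `sl_n`. -/
def qf (n : ℕ) (k : Fin (n - 1) → ℤ) : ℤ := ∑ i, ∑ j, k i * cartan n i j * k j

/-- The Gauss sum on the root lattice of `sl_n`:
`G(b) = ∑_{k ∈ {0,…,r−1}^{n−1}} ζ^{b(kᵗAk/2 + ∑ k_i)}`. -/
noncomputable def gaussG (n r : ℕ) (b : ℤ) : ℂ :=
  ∑ k : Fin (n - 1) → Fin r,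
    zetaC r ^ (b * (qf n (fun i => ((k i : ℕ) : ℤ)) / 2 + ∑ i, ((k i : ℕ) : ℤ)))

/-! ### Arithmetic of `ℤ[ζ]` -/

open NumberField in
/-- A model of `ℤ[ζ] ⊆ ℂ`, coming from the ring of integers of the `r`-th cyclotomic field, in which
`ζ - 1` is prime and `(ζ - 1)^(r-1)` is associated to `r`. -/
theorem exists_hom (r : ℕ) (hr : r.Prime) (K : Type) [Field K] [NumberField K]
    [IsCyclotomicExtension {r} ℚ K] :
    ∃ (E : Type) (_ : CommRing E) (_ : IsDomain E) (φ : E →+* ℂ) (z : E),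
      Function.Injective φ ∧ φ z = zetaC r ∧
      (∀ x : ℂ, x ∈ Subring.closure ({zetaC r} : Set ℂ) ↔ ∃ a, φ a = x) ∧
      Prime (z - 1) ∧ Associated ((z - 1) ^ (r - 1)) (r : E) := by
  have : Fact r.Prime := ⟨hr⟩
  have : NeZero r := ⟨hr.ne_zero⟩
  have hζ : IsPrimitiveRoot (IsCyclotomicExtension.zeta r ℚ K) r :=
    IsCyclotomicExtension.zeta_spec r ℚ K
  have hC : IsPrimitiveRoot (zetaC r) r := Complex.isPrimitiveRoot_exp r hr.ne_zero
  obtain ⟨f, hf⟩ : ∃ f : K →ₐ[ℚ] ℂ, f (IsCyclotomicExtension.zeta r ℚ K) = zetaC r := by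
    let e := hζ.embeddingsEquivPrimitiveRoots ℂ (Polynomial.cyclotomic.irreducible_rat hr.pos)
    refine ⟨e.symm ⟨zetaC r, (mem_primitiveRoots hr.pos).2 hC⟩, ?_⟩
    rw [← hζ.embeddingsEquivPrimitiveRoots_apply_coe ℂ
      (Polynomial.cyclotomic.irreducible_rat hr.pos)]
    simp [e]
  refine ⟨𝓞 K, inferInstance, inferInstance, f.toRingHom.comp (algebraMap (𝓞 K) K), hζ.toInteger,
    ?_, ?_, ?_, hζ.zeta_sub_one_prime', ?_⟩
  · exact f.toRingHom.injective.comp RingOfIntegers.coe_injective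
  · exact hf
  · intro x
    constructor
    · intro hx
      have : Subring.closure ({zetaC r} : Set ℂ) ≤
          (f.toRingHom.comp (algebraMap (𝓞 K) K)).range := by
        rw [Subring.closure_le, Set.singleton_subset_iff]
        exact ⟨hζ.toInteger, hf⟩
      exact this hx
    · rintro ⟨a, rfl⟩
      have hi := IsCyclotomicExtension.Rat.isIntegralClosure_adjoin_singleton_of_prime hζ
      obtain ⟨y, hy⟩ := (hi.isIntegral_iff (x := (a : K))).1 a.2
      have hy' : (a : K) ∈ Algebra.adjoin ℤ {IsCyclotomicExtension.zeta r ℚ K} := hy ▸ y.2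
      change f (a : K) ∈ _
      generalize (a : K) = w at hy'
      induction hy' using Algebra.adjoin_induction with
      | mem x hx => rw [Set.mem_singleton_iff.1 hx, hf]; exact Subring.subset_closure rfl
      | algebraMap n => simp
      | add x y _ _ hx hy => rw [map_add]; exact add_mem hx hy
      | mul x y _ _ hx hy => rw [map_mul]; exact mul_mem hx hy
  · exact IsCyclotomicExtension.Rat.associated_zeta_sub_one_pow_prime r hζ

theorem star_zetaC_mul (r : ℕ) (hr : r ≠ 0) : star (zetaC r) * zetaC r = 1 := by
  have hC : IsPrimitiveRoot (zetaC r) r := Complex.isPrimitiveRoot_exp r hr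
  have h := Complex.conj_mul' (zetaC r)
  rw [hC.norm'_eq_one hr, Complex.ofReal_one, one_pow] at h
  exact h

theorem star_mem_closure (r : ℕ) (hr : r ≠ 0) (x : ℂ)
    (hx : x ∈ Subring.closure ({zetaC r} : Set ℂ)) :
    star x ∈ Subring.closure ({zetaC r} : Set ℂ) := by
  have hC : IsPrimitiveRoot (zetaC r) r := Complex.isPrimitiveRoot_exp r hr
  induction hx using Subring.closure_induction with
  | mem x hx =>
    rw [Set.mem_singleton_iff.1 hx]
    have h1 : star (zetaC r) = zetaC r ^ (r - 1) := by
      have h3 : zetaC r ^ (r - 1) * zetaC r = 1 := by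
        rw [pow_sub_one_mul hr, hC.pow_eq_one]
      apply mul_right_cancel₀ (hC.ne_zero hr)
      rw [star_zetaC_mul r hr, h3]
    rw [h1]
    have hm := Subring.subset_closure (R := ℂ) (Set.mem_singleton (zetaC r))
    exact pow_mem hm _
  | zero => simp
  | one => simp
  | add x y _ _ hx hy => rw [star_add]; exact add_mem hx hy
  | neg x _ hx => rw [star_neg]; exact neg_mem hx
  | mul x y _ _ hx hy => rw [star_mul']; exact mul_mem hx hy

/-- An element of `ℤ[ζ]` of absolute value `r^(m/2)` is a unit times `(ζ - 1)^(m(r-1)/2)`: it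
divides a power of the prime `ζ - 1`, and complex conjugation preserves the exponent. -/
theorem eq_unit_mul_pow (r : ℕ) (hr : r.Prime) (m : ℕ) (g : ℂ)
    (hg : g ∈ Subring.closure ({zetaC r} : Set ℂ)) (h : g * star g = (r : ℂ) ^ m) :
    ∃ u v : ℂ, u ∈ Subring.closure ({zetaC r} : Set ℂ) ∧
      v ∈ Subring.closure ({zetaC r} : Set ℂ) ∧ u * v = 1 ∧
      g = u * (zetaC r - 1) ^ (m * (r - 1) / 2) := by
  have : NeZero r := ⟨hr.ne_zero⟩
  have : IsCyclotomicExtension {r} ℚ (CyclotomicField r ℚ) :=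
    CyclotomicField.isCyclotomicExtension r ℚ
  obtain ⟨E, _, _, φ, z, hinj, hz, hR, hp, hrp⟩ := exists_hom r hr (CyclotomicField r ℚ)
  have hst := star_mem_closure r hr.ne_zero
  obtain ⟨a, ha⟩ := (hR g).1 hg
  obtain ⟨a', ha'⟩ := (hR _).1 (hst g hg)
  have haa : a * a' = (r : E) ^ m := hinj (by rw [map_mul, ha, ha', h, map_pow, map_natCast])
  have hpow : Associated ((z - 1) ^ (m * (r - 1))) (a * a') := by
    rw [haa, mul_comm m, pow_mul]
    exact hrp.pow_pow
  obtain ⟨i, -, hi⟩ := (dvd_prime_pow hp (m * (r - 1))).1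
    ((Dvd.intro _ rfl).trans hpow.symm.dvd : a ∣ (z - 1) ^ (m * (r - 1)))
  obtain ⟨w, hw⟩ := hi.symm
  obtain ⟨u', hu'⟩ := (hR _).1 (hst _ ((hR _).2 ⟨(w : E), rfl⟩))
  obtain ⟨v', hv'⟩ := (hR _).1 (hst _ ((hR _).2 ⟨((w⁻¹ : Eˣ) : E), rfl⟩))
  obtain ⟨s, hs⟩ := (hR _).1 (hst _ ((hR _).2 ⟨z, rfl⟩))
  have hsz : s * z = 1 := by
    apply hinj
    rw [map_mul, hs, hz, star_zetaC_mul r hr.ne_zero, map_one]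
  have huv : u' * v' = 1 := hinj (by
    rw [map_mul, hu', hv', ← star_mul', ← map_mul, w.mul_inv, map_one, star_one])
  -- complex conjugation multiplies `ζ - 1` by the unit `-ζ⁻¹`
  have hconj : a' = u' * (-s) ^ i * (z - 1) ^ i := by
    have h1 : s - 1 = -s * (z - 1) := by linear_combination hsz
    rw [mul_assoc, ← mul_pow, ← h1]
    apply hinj
    rw [ha', ← ha, ← hw]
    rw [map_mul, map_mul, map_pow, star_mul', map_pow, hu', map_sub, map_sub, hs, map_one, star_pow,
      star_sub, star_one, mul_comm]
  have hass : Associated ((z - 1) ^ i) a' := by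
    have hU : IsUnit (u' * (-s) ^ i) :=
      (IsUnit.of_mul_eq_one v' huv).mul ((IsUnit.of_mul_eq_one z hsz).neg.pow i)
    rw [hconj]
    exact (associated_unit_mul_left _ _ hU).symm
  have hfin : Associated ((z - 1) ^ (m * (r - 1))) ((z - 1) ^ (i + i)) := by
    rw [pow_add]
    exact hpow.trans (hi.mul_mul hass.symm)
  have hexp : m * (r - 1) = i + i :=
    le_antisymm ((pow_dvd_pow_iff hp.ne_zero hp.not_isUnit).1 hfin.dvd)
      ((pow_dvd_pow_iff hp.ne_zero hp.not_isUnit).1 hfin.symm.dvd)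
  refine ⟨φ w, φ ((w⁻¹ : Eˣ) : E), (hR _).2 ⟨_, rfl⟩, (hR _).2 ⟨_, rfl⟩, by rw [← map_mul, w.mul_inv, map_one], ?_⟩
  rw [hexp, show (i + i) / 2 = i by omega, ← ha, ← hw]
  simp [hz, mul_comm]

/-! ### The quadratic form -/

/-- The upper triangular half of the Cartan matrix of `sl_n` over `S`: `1` on the diagonal and `-1`
just above it. The Cartan matrix is the sum of this matrix and its transpose. -/
def halfCartan (n : ℕ) (S : Type*) [CommRing S] (i j : Fin (n - 1)) : S :=
  (if i = j then 1 else 0) - (if (i : ℕ) + 1 = (j : ℕ) then 1 else 0)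

/-- The quadratic form `kᵗAk/2`, written without division by means of the triangular half of `A`,
so that it makes sense over every commutative ring. -/
def halfForm (n : ℕ) {S : Type*} [CommRing S] (x : Fin (n - 1) → S) : S :=
  ∑ i, ∑ j, x i * halfCartan n S i j * x j

theorem cartan_eq (n : ℕ) (i j : Fin (n - 1)) :
    cartan n i j = halfCartan n ℤ i j + halfCartan n ℤ j i := by
  simp only [cartan, halfCartan, Matrix.of_apply, Fin.ext_iff]
  split_ifs <;> omega

theorem qf_div_two (n : ℕ) (k : Fin (n - 1) → ℤ) : qf n k / 2 = halfForm n k := by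
  have : qf n k = 2 * halfForm n k := by
    have hc : ∑ i, ∑ j, k i * halfCartan n ℤ j i * k j = halfForm n k := by
      rw [Finset.sum_comm]
      exact Finset.sum_congr rfl fun i _ => Finset.sum_congr rfl fun j _ => by ring
    simp only [qf, cartan_eq, mul_add, add_mul, Finset.sum_add_distrib, hc]
    rw [two_mul]; rfl
  omega

theorem halfForm_intCast (n : ℕ) {S : Type*} [CommRing S] (k : Fin (n - 1) → ℤ) :
    ((halfForm n k : ℤ) : S) = halfForm n fun i => (k i : S) := by
  simp [halfForm, halfCartan]

theorem halfForm_add (n : ℕ) {S : Type*} [CommRing S] (z y : Fin (n - 1) → S) :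
    halfForm n (z + y) = halfForm n z + halfForm n y +
      ∑ i, y i * ∑ j, (halfCartan n S i j + halfCartan n S j i) * z j := by
  have hc : ∑ i, ∑ j, z i * halfCartan n S i j * y j =
      ∑ i, ∑ j, y i * (halfCartan n S j i * z j) := by
    rw [Finset.sum_comm]
    exact Finset.sum_congr rfl fun i _ => Finset.sum_congr rfl fun j _ => by ring
  simp only [halfForm, Pi.add_apply, add_mul, mul_add, Finset.sum_add_distrib, Finset.mul_sum, mul_assoc]
  simp only [← mul_assoc] at hc ⊢
  rw [hc]
  ring

/-- The Cartan matrix of `sl_n` is invertible mod `r` when `n < r`. The equations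
`z_{l+1} = 2 z_l - z_{l-1}` with `z_0 = 0` give `z_l = l z_1`, and then `z_n = 0` reads
`n z_1 = 0`. -/
theorem eq_zero_of_cartan_mulVec_eq_zero (n r : ℕ) (hn : 2 ≤ n) [Fact r.Prime] (hrn : n < r)
    (z : Fin (n - 1) → ZMod r)
    (h : ∀ i, ∑ j, (halfCartan n (ZMod r) i j + halfCartan n (ZMod r) j i) * z j = 0) :
    z = 0 := by
  -- `z` shifted by one and extended by zero, which absorbs the two boundary rows
  let f : ℕ → ZMod r := fun l => if hl : 1 ≤ l ∧ l < n then z ⟨l - 1, by omega⟩ else 0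
  have hfz : ∀ j : Fin (n - 1), z j = f (j + 1) := fun j => by
    have := j.2
    simp [f, show (j : ℕ) + 1 < n by omega]
  have hrow : ∀ i : Fin (n - 1), f (i + 2) = 2 * f (i + 1) - f i := fun i => by
    have hi := h i
    have h1 : ∑ j : Fin (n - 1), (if (i : ℕ) + 1 = (j : ℕ) then f (j + 1) else 0) = f (i + 2) := by
      by_cases hl : (i : ℕ) + 1 < n - 1
      · rw [Fintype.sum_eq_single ⟨i + 1, hl⟩ fun j hj => if_neg fun e => hj (Fin.ext e.symm)]
        simp
      · rw [Finset.sum_eq_zero fun j _ => if_neg (by omega)]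
        simp only [f]; rw [dif_neg (by omega)]
    have h2 : ∑ j : Fin (n - 1), (if (j : ℕ) + 1 = (i : ℕ) then f (j + 1) else 0) = f i := by
      by_cases hl : 1 ≤ (i : ℕ)
      · have e : (i : ℕ) - 1 + 1 = i := by omega
        rw [Fintype.sum_eq_single ⟨i - 1, by omega⟩
          fun j hj => if_neg fun e' => hj (Fin.ext (by simp; omega))]
        simp [e]
      · rw [Finset.sum_eq_zero fun j _ => if_neg (by omega)]
        simp only [f]; rw [dif_neg (by omega)]
    simp only [halfCartan, hfz, add_mul, sub_mul, ite_mul, one_mul, zero_mul,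
      Finset.sum_add_distrib, Finset.sum_sub_distrib, Finset.sum_ite_eq, Finset.sum_ite_eq',
      Finset.mem_univ, if_true, h1, h2] at hi
    linear_combination -hi
  have hlin : ∀ l, l + 1 ≤ n → f l = l * f 1 ∧ f (l + 1) = (l + 1) * f 1 := by
    intro l
    induction l with
    | zero => intro _; simp [f]
    | succ l ih =>
      intro hl
      obtain ⟨e1, e2⟩ := ih (by omega)
      have := hrow ⟨l, by omega⟩
      simp only at this
      refine ⟨by push_cast; exact e2, ?_⟩
      push_cast
      linear_combination this + 2 * e2 - e1
  have hn0 : (n : ZMod r) * f 1 = 0 := by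
    have e := (hlin (n - 1) (by omega)).2
    have e' : (((n - 1 : ℕ) : ZMod r) + 1) = n := by
      exact_mod_cast congrArg (Nat.cast : ℕ → ZMod r) (show n - 1 + 1 = n by omega)
    rw [e', show n - 1 + 1 = n by omega] at e
    rw [← e]
    simp [f]
  have hne : (n : ZMod r) ≠ 0 := by
    rw [Ne, ZMod.natCast_eq_zero_iff]
    exact fun hd => absurd (Nat.le_of_dvd (by omega) hd) (by omega)
  have hf1 : f 1 = 0 := (mul_eq_zero.1 hn0).resolve_left hne
  funext j
  have := j.2
  rw [hfz, (hlin j (by omega)).2, hf1]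
  simp

/-! ### The Gauss sum -/

theorem zetaC_zpow (r : ℕ) [NeZero r] (a : ℤ) : zetaC r ^ a = ZMod.stdAddChar (a : ZMod r) := by
  rw [ZMod.stdAddChar_coe, zetaC, ← Complex.exp_int_mul]
  congr 1; ring

/-- The summand only depends on `k` mod `r`, so `G(b)` is a sum over `(ℤ/r)^(n-1)`. -/
theorem gaussG_eq (n r : ℕ) [NeZero r] (b : ℤ) :
    gaussG n r b = ∑ x : Fin (n - 1) → ZMod r,
      ZMod.stdAddChar ((b : ZMod r) * (halfForm n x + ∑ i, x i)) := by
  let e : (Fin (n - 1) → Fin r) ≃ (Fin (n - 1) → ZMod r) :=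
    Equiv.piCongrRight fun _ => ((ZMod.finEquiv r).toEquiv)
  have he : ∀ (k : Fin (n - 1) → Fin r) i, e k i = (((k i : ℕ) : ℤ) : ZMod r) := fun k i => by
    obtain ⟨r, rfl⟩ : ∃ s, r = s + 1 := ⟨r - 1, (Nat.succ_pred_eq_of_ne_zero (NeZero.ne r)).symm⟩
    change k i = _
    push_cast
    exact (Fin.cast_val_eq_self (k i)).symm
  rw [gaussG, ← Equiv.sum_comp e]
  refine Finset.sum_congr rfl fun k _ => ?_
  rw [zetaC_zpow, qf_div_two]
  push_cast
  rw [halfForm_intCast]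
  rw [show e k = fun i => (((k i : ℕ) : ℤ) : ZMod r) from funext (he k)]
  push_cast
  rfl

theorem sum_stdAddChar_linear {m r : ℕ} [NeZero r] (c : Fin m → ZMod r) (hc : c ≠ 0) :
    ∑ y : Fin m → ZMod r, (ZMod.stdAddChar (∑ i, y i * c i) : ℂ) = 0 := by
  let L : (Fin m → ZMod r) →+ ZMod r :=
    { toFun := fun y => ∑ i, y i * c i
      map_zero' := by simp
      map_add' := fun x y => by simp [add_mul, Finset.sum_add_distrib] }
  have hne : (ZMod.stdAddChar (N := r)).compAddMonoidHom L ≠ 0 := by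
    obtain ⟨i, hi⟩ := Function.ne_iff.1 hc
    intro h0
    have h1 := DFunLike.congr_fun h0 (Pi.single i 1)
    have h2 : L (Pi.single i 1) = c i := by simp [L, Pi.single_apply]
    rw [AddChar.compAddMonoidHom_apply, h2, AddChar.zero_apply,
      ← AddChar.map_zero_eq_one (ZMod.stdAddChar (N := r))] at h1
    exact hi (ZMod.injective_stdAddChar h1)
  exact AddChar.sum_eq_zero_iff_ne_zero.2 hne

/-- `|G(b)|² = r^(n-1)`. In the double sum over `(x, y)`, substitute `x = z + y`: the inner sum over
`y` is that of a character with frequency `b A z`, which is trivial only for `z = 0`. -/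
theorem gaussG_mul_star (n r : ℕ) (hn : 2 ≤ n) [Fact r.Prime] (hrn : n < r)
    (b : ℤ) (hb : ¬ ((r : ℤ) ∣ b)) :
    gaussG n r b * star (gaussG n r b) = (r : ℂ) ^ (n - 1) := by
  have hb' : (b : ZMod r) ≠ 0 := by rwa [Ne, ZMod.intCast_zmod_eq_zero_iff_dvd]
  let q : (Fin (n - 1) → ZMod r) → ZMod r := fun x => b * (halfForm n x + ∑ i, x i)
  let c : (Fin (n - 1) → ZMod r) → Fin (n - 1) → ZMod r := fun z i =>
    b * ∑ j, (halfCartan n (ZMod r) i j + halfCartan n (ZMod r) j i) * z j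
  have hq : ∀ z y, q (z + y) - q y = q z + ∑ i, y i * c z i := fun z y => by
    have : ∑ i, y i * c z i = b * ∑ i, y i *
        ∑ j, (halfCartan n (ZMod r) i j + halfCartan n (ZMod r) j i) * z j := by
      rw [Finset.mul_sum]
      exact Finset.sum_congr rfl fun i _ => by simp only [c]; ring
    rw [this]
    simp only [q, halfForm_add, Pi.add_apply, Finset.sum_add_distrib]
    ring
  have hc : ∀ z, z ≠ 0 → c z ≠ 0 := fun z hz h0 => hz <|
    eq_zero_of_cartan_mulVec_eq_zero n r hn hrn z fun i =>
      (mul_eq_zero.1 (congrFun h0 i)).resolve_left hb'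
  have hstar : star (gaussG n r b) = ∑ y, (ZMod.stdAddChar (-q y) : ℂ) := by
    rw [gaussG_eq, star_sum]
    exact Finset.sum_congr rfl fun y _ => (AddChar.map_neg_eq_conj _ _).symm
  calc gaussG n r b * star (gaussG n r b)
      = ∑ y : Fin (n - 1) → ZMod r, ∑ x, (ZMod.stdAddChar (q x - q y) : ℂ) := by
        rw [hstar, gaussG_eq, Finset.sum_mul_sum, Finset.sum_comm]
        exact Finset.sum_congr rfl fun y _ => Finset.sum_congr rfl fun x _ => by
          rw [sub_eq_add_neg, AddChar.map_add_eq_mul]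
    _ = ∑ y : Fin (n - 1) → ZMod r, ∑ z, (ZMod.stdAddChar (q z + ∑ i, y i * c z i) : ℂ) := by
        refine Finset.sum_congr rfl fun y _ => ?_
        rw [← Equiv.sum_comp (Equiv.addRight y)]
        exact Finset.sum_congr rfl fun z _ => by rw [← hq]; rfl
    _ = ∑ z, ZMod.stdAddChar (q z) *
          ∑ y : Fin (n - 1) → ZMod r, (ZMod.stdAddChar (∑ i, y i * c z i) : ℂ) := by
        rw [Finset.sum_comm]
        simp only [AddChar.map_add_eq_mul, Finset.mul_sum]
    _ = (r : ℂ) ^ (n - 1) := by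
        rw [Fintype.sum_eq_single 0 fun z hz => by rw [sum_stdAddChar_linear _ (hc z hz), mul_zero]]
        simp [q, c, halfForm]

theorem gaussG_mem_closure (n r : ℕ) [NeZero r] (b : ℤ) :
    gaussG n r b ∈ Subring.closure ({zetaC r} : Set ℂ) := by
  rw [gaussG_eq]
  refine sum_mem fun x _ => ?_
  generalize (b : ZMod r) * (halfForm n x + ∑ i, x i) = y
  rw [← ZMod.natCast_zmod_val y, ← Int.cast_natCast (R := ZMod r), ← zetaC_zpow, zpow_natCast]
  have hm := Subring.subset_closure (R := ℂ) (Set.mem_singleton (zetaC r))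
  exact pow_mem hm _

/-- `G(b)` is a unit of `ℤ[ζ]` times `(ζ-1)^{(n-1)(r-1)/2}`. -/
theorem stmt4 (n r : ℕ) (hn : 2 ≤ n) (hr : r.Prime) (hodd : Odd r) (hrn : n < r)
    (b : ℤ) (hb : ¬ ((r : ℤ) ∣ b)) :
    ∃ u v : ℂ, u ∈ Subring.closure ({zetaC r} : Set ℂ) ∧
      v ∈ Subring.closure ({zetaC r} : Set ℂ) ∧ u * v = 1 ∧
      gaussG n r b = u * (zetaC r - 1) ^ ((n - 1) * (r - 1) / 2) := by
  have : Fact r.Prime := ⟨hr⟩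
  have : NeZero r := ⟨hr.ne_zero⟩
  exact eq_unit_mul_pow r hr (n - 1) _ (gaussG_mem_closure n r b) (gaussG_mul_star n r hn hrn b hb)
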